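/- For all positive integers m and n, the orbit-counting generating function for symmetric plane partitions P contained in the box B(n,n,m) is given by: ∑_P q^{o(P)} = ∏_{η ∈ B(n,n,m)/S_2} (1 − q^{1+Ht(η)})/(1 − q^{Ht(η)}), as an identity in the formal power series ring ℚ[[q]], where each (1 − q^a)^{−1} denotes the inverse of the unit 1 − q^a. Here o(P) is the number of orbits of P under the transposition (i,j,k) ↦ (j,i,k), the product is over the orbits η of B(n,n,m) under this transposition, and Ht(η) = i + j + k − 2 for any representative (i,j,k) of η. -/

import Mathlib

open scoped Classical

/-- A plane partition: a finite set of lattice points with positive integer coordinates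
that is downward closed. -/
def IsPlanePartition (P : Finset (ℕ × ℕ × ℕ)) : Prop :=
  (∀ p ∈ P, 1 ≤ p.1 ∧ 1 ≤ p.2.1 ∧ 1 ≤ p.2.2) ∧
    ∀ p ∈ P, ∀ i j k : ℕ,
      1 ≤ i → i ≤ p.1 → 1 ≤ j → j ≤ p.2.1 → 1 ≤ k → k ≤ p.2.2 → (i, j, k) ∈ P

/-- A plane partition is symmetric if it is invariant under transposing the first two
coordinates. -/
def IsSymmetricPP (P : Finset (ℕ × ℕ × ℕ)) : Prop :=
  ∀ i j k : ℕ, (i, j, k) ∈ P ↔ (j, i, k) ∈ P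

/-- The box `B(n₁,n₂,m) = {(i,j,k) : 1 ≤ i ≤ n₁, 1 ≤ j ≤ n₂, 1 ≤ k ≤ m}` as a finset. -/
def ppBox (n₁ n₂ m : ℕ) : Finset (ℕ × ℕ × ℕ) :=
  Finset.Icc 1 n₁ ×ˢ Finset.Icc 1 n₂ ×ˢ Finset.Icc 1 m

/-- The number of orbits of `P` under the transposition `(i,j,k) ↦ (j,i,k)`, i.e. the
number of distinct sets `{(i,j,k),(j,i,k)}` with `(i,j,k) ∈ P`. -/
def orbitCount (P : Finset (ℕ × ℕ × ℕ)) : ℕ :=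
  (P.image (fun p => ({p, (p.2.1, p.1, p.2.2)} : Finset (ℕ × ℕ × ℕ)))).card

/-!
The diagonals of a symmetric plane partition in `B(n, n, m)`, on and above the main diagonal, form a
triangular array, and adding a staircase turns it into a strict Gelfand–Tsetlin pattern with entries
below `m + n`; the number of orbits becomes the sum of the entries, up to a constant. The patterns
with a given top row `l` are counted, up to a factor independent of `l`, by the alternant
`det (x i ^ l j)` at `x i = q ^ (i + 1)`. By the bounded Littlewood identity the sum of these
alternants over all `l` with entries below `m + n` is a determinant of type `C`, which the Weyl
denominator formula evaluates as `∏_{i ≤ j} (1 - q ^ (m + i + j + 1))` up to a factor independent of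
`m`. The case `m = 0` determines that factor, and the quotient telescopes to the orbit product.
-/

section PartialFractions

theorem coeff_prod_C_mul_X_sub_one {R : Type*} [CommRing R] (t : Finset R) :
    (∏ b ∈ t, (Polynomial.C b * Polynomial.X - 1)).coeff t.card = ∏ b ∈ t, b := by
  have h := Polynomial.coeff_prod_of_natDegree_le
    (s := t) (f := fun b : R => Polynomial.C b * Polynomial.X - 1) (n := 1)
    fun b _ => by compute_degree
  simpa [Polynomial.coeff_one] using h

theorem natDegree_prod_C_mul_X_sub_one_le {R : Type*} [CommRing R] (t : Finset R) :
    (∏ b ∈ t, (Polynomial.C b * Polynomial.X - 1)).natDegree ≤ t.card := by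
  have hlin (b : R) : (Polynomial.C b * Polynomial.X - 1).natDegree ≤ 1 := by compute_degree
  refine (Polynomial.natDegree_prod_le _ _).trans ?_
  simpa using Finset.sum_le_sum fun b (_ : b ∈ t) => hlin b

/-- The leading coefficient of `∏ b ∈ t, (b X - 1)` by Lagrange interpolation at `t ∪ {-1}`. -/
theorem sum_one_sub_mul_prod_div_sub {K : Type*} [Field K] (t : Finset K)
    (ht : -1 ∉ t) :
    ∑ a ∈ t, (1 - a) * ∏ b ∈ t.erase a, ((1 - a * b) / (b - a)) = 1 - ∏ a ∈ t, a := by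
  set P : Polynomial K := ∏ b ∈ t, (Polynomial.C b * Polynomial.X - 1) with hP
  have hne : ∀ a ∈ t, a + 1 ≠ 0 := fun a ha h => ht (eq_neg_of_add_eq_zero_left h ▸ ha)
  have hcard : (insert (-1) t).card = t.card + 1 := Finset.card_insert_of_notMem ht
  have heval (a : K) : P.eval a = ∏ b ∈ t, (b * a - 1) := by simp [hP, Polynomial.eval_prod]
  have at_neg_one : P.eval (-1) / ∏ b ∈ t, (-1 - b) = 1 := by
    rw [heval, ← Finset.prod_div_distrib]
    refine Finset.prod_eq_one fun b hb => ?_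
    rw [mul_neg_one, neg_sub_comm, div_self]
    exact neg_sub_left 1 b ▸ neg_ne_zero.mpr (hne b hb)
  have at_mem : ∀ a ∈ t, P.eval a / ∏ b ∈ (insert (-1) t).erase a, (a - b) =
      -((1 - a) * ∏ b ∈ t.erase a, ((1 - a * b) / (b - a))) := by
    intro a ha
    have ha1 : (-1 : K) ≠ a := fun h => ht (h ▸ ha)
    have hflip (b : K) : (1 - a * b) / (b - a) = (b * a - 1) / (a - b) := by
      rw [← neg_div_neg_eq]; ring
    rw [Finset.erase_insert_of_ne ha1, Finset.prod_insert (by simp [ht]), heval,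
      ← Finset.mul_prod_erase t _ ha, Finset.prod_congr rfl fun b _ => hflip b,
      Finset.prod_div_distrib, mul_div_mul_comm, sub_neg_eq_add, ← neg_mul]
    congr 1
    rw [div_eq_iff (hne a ha)]
    ring
  have hdeg : P.degree < (insert (-1) t).card := by
    rw [hcard]
    exact Polynomial.degree_le_natDegree.trans_lt
      (by exact_mod_cast Nat.lt_succ_of_le (natDegree_prod_C_mul_X_sub_one_le t))
  have key := Lagrange.coeff_eq_sum (v := id) Function.injective_id.injOn hdeg
  simp only [id, hcard, Nat.add_sub_cancel, Finset.sum_insert ht, Finset.erase_insert ht] at key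
  rw [coeff_prod_C_mul_X_sub_one, at_neg_one, Finset.sum_congr rfl at_mem,
    Finset.sum_neg_distrib] at key
  rw [key]
  ring

end PartialFractions

section SplittingOffAnIndex

theorem prod_prod_Ioi_succAbove {M : Type*} [CommMonoid M] {n : ℕ}
    (f : Fin (n + 1) → Fin (n + 1) → M) (hf : ∀ i j, f i j = f j i) (k : Fin (n + 1)) :
    ∏ i, ∏ j ∈ Finset.Ioi i, f i j =
      (∏ i : Fin n, ∏ j ∈ Finset.Ioi i, f (k.succAbove i) (k.succAbove j)) *
        ∏ j, f k (k.succAbove j) := by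
  have prod_Ioi {m : ℕ} (i : Fin m) (g : Fin m → M) :
      ∏ j ∈ Finset.Ioi i, g j = ∏ j, if i < j then g j else 1 := by
    rw [← Finset.prod_filter, Finset.filter_lt_eq_Ioi]
  simp only [prod_Ioi, Fin.prod_univ_succAbove _ k, lt_self_iff_false, if_false, one_mul,
    Finset.prod_mul_distrib, Fin.succAbove_lt_succAbove_iff]
  rw [← mul_assoc, mul_comm, ← Finset.prod_mul_distrib]
  refine congrArg _ (Finset.prod_congr rfl fun j _ => ?_)
  rcases lt_or_gt_of_ne (Fin.succAbove_ne k j) with h | h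
  · simp [h, h.not_gt, hf (k.succAbove j)]
  · simp [h, h.not_gt]

theorem det_projVandermonde_succAbove {R : Type*} [CommRing R] {n : ℕ} (v w : Fin (n + 1) → R)
    (k : Fin (n + 1)) :
    (Matrix.projVandermonde v w).det =
      (-1) ^ (k : ℕ) * (Matrix.projVandermonde (v ∘ k.succAbove) (w ∘ k.succAbove)).det *
        ∏ j, (v (k.succAbove j) * w k - v k * w (k.succAbove j)) := by
  have hperm := Matrix.det_permute k.cycleRange.symm (Matrix.projVandermonde v w)
  rw [← Matrix.projVandermonde_comp, Equiv.Perm.sign_symm, Fin.sign_cycleRange,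
    Matrix.det_projVandermonde, Fin.prod_univ_succ, Fin.prod_Ioi_zero] at hperm
  simp only [Fin.prod_Ioi_succ, Function.comp_apply, Fin.cycleRange_symm_zero,
    Fin.cycleRange_symm_succ] at hperm
  rw [Matrix.det_projVandermonde (v ∘ k.succAbove), mul_assoc, mul_comm (∏ i, _)]
  simp only [Function.comp_apply]
  rw [hperm, ← mul_assoc]
  simp [← mul_pow]

end SplittingOffAnIndex

section Alternants

theorem det_sum_row {R ι m : Type*} [CommRing R] [Fintype m] [DecidableEq m]
    (s : m → Finset ι) (f : m → ι → m → R) :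
    (Matrix.of fun i j => ∑ t ∈ s i, f i t j).det =
      ∑ μ ∈ Fintype.piFinset s, (Matrix.of fun i j => f i (μ i) j).det := by
  have h := (Matrix.detRowAlternating (n := m) (R := R)).toMultilinearMap.map_sum_finset f s
  refine Eq.trans (congrArg Matrix.det ?_) h
  ext i j
  simp

/-- The strictly decreasing `n`-tuples of natural numbers less than `N`. -/
def decreasingTuples (n N : ℕ) : Finset (Fin n → ℕ) :=
  (Fintype.piFinset fun _ => Finset.range N).filter StrictAnti

theorem mem_decreasingTuples {n N : ℕ} {l : Fin n → ℕ} :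
    l ∈ decreasingTuples n N ↔ (∀ i, l i < N) ∧ StrictAnti l := by
  simp [decreasingTuples]

theorem strictAnti_cons {α : Type*} [Preorder α] {n : ℕ} {a : α} {l : Fin n → α} :
    StrictAnti (Fin.cons a l : Fin (n + 1) → α) ↔ (∀ i, l i < a) ∧ StrictAnti l :=
  Fin.strictMono_cons (α := αᵒᵈ)

theorem cons_mem_decreasingTuples {n N t : ℕ} {l : Fin n → ℕ} :
    (Fin.cons t l : Fin (n + 1) → ℕ) ∈ decreasingTuples (n + 1) N ↔
      t < N ∧ l ∈ decreasingTuples n t := by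
  simp only [mem_decreasingTuples, strictAnti_cons, Fin.forall_fin_succ, Fin.cons_zero,
    Fin.cons_succ]
  exact ⟨fun h => ⟨h.1.1, h.2⟩, fun h => ⟨⟨h.1, fun i => (h.2.1 i).trans h.1⟩, h.2⟩⟩

theorem sum_decreasingTuples_succ {M : Type*} [AddCommMonoid M] (n N : ℕ)
    (f : (Fin (n + 1) → ℕ) → M) :
    ∑ l ∈ decreasingTuples (n + 1) N, f l =
      ∑ t ∈ Finset.range N, ∑ l ∈ decreasingTuples n t, f (Fin.cons t l) := by
  rw [Finset.sum_sigma']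
  refine Finset.sum_bij' (fun l _ => ⟨l 0, Fin.tail l⟩) (fun p _ => Fin.cons p.1 p.2)
    (fun l hl => ?_) (fun p hp => ?_) (fun l _ => Fin.cons_self_tail l) (fun p _ => by simp)
    (fun l _ => congrArg f (Fin.cons_self_tail l).symm)
  · rw [← Fin.cons_self_tail l, cons_mem_decreasingTuples] at hl
    simpa using hl
  · simpa [cons_mem_decreasingTuples] using hp

variable {R : Type*} [CommRing R]

/-- The sum of the alternants `det (x i ^ l j)` over all strictly decreasing exponent vectors `l`
with entries less than `N`. Divided by the Vandermonde determinant it is the sum of the Schur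
polynomials of the partitions with at most `n` parts, all of them at most `N - n`. -/
def alternantSum {n : ℕ} (N : ℕ) (x : Fin n → R) : R :=
  ∑ l ∈ decreasingTuples n N, (Matrix.of fun i j => x i ^ l j).det

theorem map_alternantSum {S : Type*} [CommRing S] (f : R →+* S) {n : ℕ} (N : ℕ) (x : Fin n → R) :
    f (alternantSum N x) = alternantSum N (f ∘ x) := by
  simp only [alternantSum, map_sum, RingHom.map_det]
  refine Finset.sum_congr rfl fun l _ => congrArg Matrix.det ?_
  ext i j
  simp

theorem alternantSum_fin_zero (N : ℕ) (x : Fin 0 → R) : alternantSum N x = 1 := by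
  have hsingleton : decreasingTuples 0 N = {Fin.elim0} := by
    ext l
    simp [mem_decreasingTuples, Subsingleton.elim l Fin.elim0, StrictAnti]
  simp [alternantSum, hsingleton]

theorem alternantSum_zero {n : ℕ} (x : Fin (n + 1) → R) : alternantSum 0 x = 0 := by
  rw [alternantSum, sum_decreasingTuples_succ, Finset.sum_range_zero]

theorem alternantSum_succ {n : ℕ} (N : ℕ) (x : Fin (n + 1) → R) :
    alternantSum (N + 1) x = alternantSum N x +
      ∑ k : Fin (n + 1), (-1) ^ (k : ℕ) * x k ^ N * alternantSum N (x ∘ k.succAbove) := by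
  simp only [alternantSum]
  rw [sum_decreasingTuples_succ, sum_decreasingTuples_succ n N, Finset.sum_range_succ]
  congr 1
  simp_rw [Finset.mul_sum]
  rw [Finset.sum_comm]
  refine Finset.sum_congr rfl fun l _ => ?_
  rw [Matrix.det_succ_column_zero]
  rfl

end Alternants

section BoundedLittlewood

section CommRing

variable {R : Type*} [CommRing R] {n : ℕ}

/-- The numerator matrix of the bounded Littlewood identity. -/
def littlewoodMatrix (N : ℕ) (x : Fin n → R) : Matrix (Fin n) (Fin n) R :=
  Matrix.of fun i j => x i ^ (j.rev : ℕ) - x i ^ (N + (j : ℕ))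

/-- The denominator `∏ᵢ (1 - xᵢ) ∏_{i<j} (1 - xᵢ xⱼ)` of the bounded Littlewood identity. -/
def littlewoodDenom (x : Fin n → R) : R :=
  (∏ i, (1 - x i)) * ∏ i, ∏ j ∈ Finset.Ioi i, (1 - x i * x j)

/-- The Vandermonde determinant in which the variables not selected by `ε` are inverted,
with denominators cleared. -/
def signedVandermonde (x : Fin n → R) (ε : Fin n → Bool) : R :=
  (Matrix.projVandermonde (fun i => if ε i then x i else 1) fun i => if ε i then 1 else x i).det

theorem map_det_littlewoodMatrix {S : Type*} [CommRing S] (f : R →+* S) (N : ℕ) (x : Fin n → R) :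
    f (littlewoodMatrix N x).det = (littlewoodMatrix N (f ∘ x)).det := by
  rw [RingHom.map_det]
  congr 1
  ext i j
  simp [littlewoodMatrix]

theorem map_littlewoodDenom {S : Type*} [CommRing S] (f : R →+* S) (x : Fin n → R) :
    f (littlewoodDenom x) = littlewoodDenom (f ∘ x) := by
  simp [littlewoodDenom]

theorem littlewoodDenom_succAbove (x : Fin (n + 1) → R) (k : Fin (n + 1)) :
    littlewoodDenom x = littlewoodDenom (x ∘ k.succAbove) *
      ((1 - x k) * ∏ j, (1 - x k * x (k.succAbove j))) := by
  rw [littlewoodDenom, littlewoodDenom, Fin.prod_univ_succAbove _ k,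
    prod_prod_Ioi_succAbove _ (fun i j => by rw [mul_comm]) k]
  simp only [Function.comp_apply]
  ring

theorem det_littlewoodMatrix (N : ℕ) (x : Fin n → R) :
    (littlewoodMatrix N x).det =
      ∑ ε : Fin n → Bool, (∏ i, if ε i then -x i ^ N else 1) * signedVandermonde x ε := by
  have hrows : littlewoodMatrix N x = Matrix.of fun i (j : Fin n) => ∑ b : Bool,
      (if b then -x i ^ N else 1) *
        ((if b then x i else 1) ^ (j : ℕ) * (if b then 1 else x i) ^ (j.rev : ℕ)) := by
    ext i j
    simp [littlewoodMatrix, pow_add, sub_eq_neg_add]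
  rw [hrows, det_sum_row, Fintype.piFinset_univ]
  exact Finset.sum_congr rfl fun ε _ => Matrix.det_mul_column _ _

theorem sum_bool_succAbove {M : Type*} [AddCommMonoid M] (k : Fin (n + 1))
    (F : (Fin n → Bool) → M) :
    ∑ ε : Fin n → Bool, F ε =
      ∑ ε : Fin (n + 1) → Bool, if ε k then F (ε ∘ k.succAbove) else 0 := by
  rw [← Equiv.sum_comp (Fin.insertNthEquiv (fun _ => Bool) k), Fintype.sum_prod_type]
  simp [Function.comp_def]

end CommRing

section Field

variable {K : Type*} [Field K] {n : ℕ}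

theorem det_littlewoodMatrix_zero (x : Fin (n + 1) → K) : (littlewoodMatrix 0 x).det = 0 := by
  refine Matrix.exists_mulVec_eq_zero_iff.mp ⟨1, one_ne_zero, ?_⟩
  ext i
  simpa [littlewoodMatrix, Matrix.mulVec, dotProduct, sub_eq_zero] using
    Equiv.sum_comp Fin.revPerm fun j : Fin (n + 1) => x i ^ (j : ℕ)

theorem signedVandermonde_mul_prod_div {x : Fin (n + 1) → K} (hx : Function.Injective x)
    {ε : Fin (n + 1) → Bool} {k : Fin (n + 1)} (hk : ε k = true) :
    signedVandermonde x ε *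
        ∏ j ∈ (Finset.univ.filter fun i => ε i = true).erase k,
          ((1 - x k * x j) / (x j - x k)) =
      (-1) ^ (k : ℕ) * signedVandermonde (x ∘ k.succAbove) (ε ∘ k.succAbove) *
        ∏ j, (1 - x k * x (k.succAbove j)) := by
  have hprod : ∏ j ∈ (Finset.univ.filter fun i => ε i = true).erase k,
      ((1 - x k * x j) / (x j - x k)) =
      ∏ j, if ε (k.succAbove j) then
        (1 - x k * x (k.succAbove j)) / (x (k.succAbove j) - x k) else 1 := by
    rw [← Finset.filter_ne', Finset.filter_filter, Finset.prod_filter, Fin.prod_univ_succAbove _ k]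
    simp [Fin.succAbove_ne]
  rw [hprod, signedVandermonde, det_projVandermonde_succAbove _ _ k, mul_assoc,
    ← Finset.prod_mul_distrib]
  refine congrArg₂ _ rfl (Finset.prod_congr rfl fun j _ => ?_)
  have hne : x (k.succAbove j) - x k ≠ 0 := sub_ne_zero.mpr (hx.ne (Fin.succAbove_ne k j))
  by_cases hj : ε (k.succAbove j) = true
  · simp [hk, hj, mul_div_cancel₀ _ hne]
  · simp [hk, hj]

theorem signedVandermonde_mul_one_sub_prod {x : Fin (n + 1) → K} (hx : Function.Injective x)
    (hx1 : ∀ i, x i ≠ -1) (ε : Fin (n + 1) → Bool) :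
    signedVandermonde x ε * (1 - ∏ i, if ε i then x i else 1) =
      ∑ k, if ε k then
        (-1) ^ (k : ℕ) * signedVandermonde (x ∘ k.succAbove) (ε ∘ k.succAbove) *
          ((1 - x k) * ∏ j, (1 - x k * x (k.succAbove j))) else 0 := by
  obtain ⟨x, rfl⟩ : ∃ e : Fin (n + 1) ↪ K, ⇑e = x := ⟨⟨x, hx⟩, rfl⟩
  have key := sum_one_sub_mul_prod_div_sub ((Finset.univ.filter fun i => ε i = true).map x)
    (by simp [hx1])
  rw [Finset.sum_map, Finset.prod_map] at key
  rw [← Finset.prod_filter, ← key, Finset.mul_sum, ← Finset.sum_filter]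
  refine Finset.sum_congr rfl fun k hk => ?_
  rw [← Finset.map_erase, Finset.prod_map, mul_left_comm,
    signedVandermonde_mul_prod_div hx (Finset.mem_filter.mp hk).2, mul_left_comm]

theorem det_littlewoodMatrix_succ (N : ℕ) {x : Fin (n + 1) → K} (hx : Function.Injective x)
    (hx1 : ∀ i, x i ≠ -1) :
    (littlewoodMatrix (N + 1) x).det = (littlewoodMatrix N x).det +
      ∑ k : Fin (n + 1), (-1) ^ (k : ℕ) * x k ^ N * (littlewoodMatrix N (x ∘ k.succAbove)).det *
        ((1 - x k) * ∏ j, (1 - x k * x (k.succAbove j))) := by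
  have expand (k : Fin (n + 1)) :
      (-1) ^ (k : ℕ) * x k ^ N * (littlewoodMatrix N (x ∘ k.succAbove)).det *
          ((1 - x k) * ∏ j, (1 - x k * x (k.succAbove j))) =
        ∑ ε : Fin (n + 1) → Bool, -(∏ i, if ε i then -x i ^ N else 1) *
          if ε k then (-1) ^ (k : ℕ) * signedVandermonde (x ∘ k.succAbove) (ε ∘ k.succAbove) *
            ((1 - x k) * ∏ j, (1 - x k * x (k.succAbove j))) else 0 := by
    rw [det_littlewoodMatrix, sum_bool_succAbove k, Finset.mul_sum, Finset.sum_mul]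
    refine Finset.sum_congr rfl fun ε _ => ?_
    split_ifs with hk
    · rw [Fin.prod_univ_succAbove _ k, if_pos hk]
      simp only [Function.comp_apply]
      ring
    · simp
  rw [Finset.sum_congr rfl fun k _ => expand k, Finset.sum_comm, det_littlewoodMatrix,
    det_littlewoodMatrix, ← Finset.sum_add_distrib]
  refine Finset.sum_congr rfl fun ε _ => ?_
  have hpow : (∏ i, if ε i then -x i ^ (N + 1) else 1) =
      (∏ i, if ε i then -x i ^ N else 1) * ∏ i, if ε i then x i else 1 := by
    rw [← Finset.prod_mul_distrib]
    exact Finset.prod_congr rfl fun i _ => by split_ifs <;> ring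
  rw [← Finset.mul_sum, ← signedVandermonde_mul_one_sub_prod hx hx1, hpow]
  ring

theorem alternantSum_mul_littlewoodDenom_of_injective (N : ℕ) {x : Fin n → K}
    (hx : Function.Injective x) (hx1 : ∀ i, x i ≠ -1) :
    alternantSum N x * littlewoodDenom x = (littlewoodMatrix N x).det := by
  induction n generalizing N with
  | zero => simp [alternantSum_fin_zero, littlewoodDenom]
  | succ n ihn =>
    induction N with
    | zero => rw [alternantSum_zero, det_littlewoodMatrix_zero, zero_mul]
    | succ N ihN =>
      rw [det_littlewoodMatrix_succ N hx hx1, ← ihN, alternantSum_succ, add_mul, Finset.sum_mul]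
      refine congrArg _ (Finset.sum_congr rfl fun k _ => ?_)
      rw [← ihn N (hx.comp Fin.succAbove_right_injective) fun i => hx1 _,
        littlewoodDenom_succAbove x k]
      ring

end Field

/-- Macdonald's bounded Littlewood identity, with denominators cleared. -/
theorem alternantSum_mul_littlewoodDenom {R : Type*} [CommRing R] {n : ℕ} (N : ℕ)
    (x : Fin n → R) : alternantSum N x * littlewoodDenom x = (littlewoodMatrix N x).det := by
  let generic : Fin n → MvPolynomial (Fin n) ℤ := MvPolynomial.X
  let ι := algebraMap (MvPolynomial (Fin n) ℤ) (FractionRing (MvPolynomial (Fin n) ℤ))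
  have hι : Function.Injective ι := IsFractionRing.injective _ _
  have hgeneric : alternantSum N generic * littlewoodDenom generic =
      (littlewoodMatrix N generic).det := by
    apply hι
    rw [map_mul, map_alternantSum, map_littlewoodDenom, map_det_littlewoodMatrix]
    refine alternantSum_mul_littlewoodDenom_of_injective N
      (hι.comp MvPolynomial.X_injective) fun i h => ?_
    have h' : generic i = -1 := hι (by simpa using h)
    simpa [generic] using congrArg MvPolynomial.constantCoeff h'
  have hspec := congrArg (MvPolynomial.aeval x : _ →ₐ[ℤ] R).toRingHom hgeneric
  rw [map_mul, map_alternantSum, map_littlewoodDenom, map_det_littlewoodMatrix] at hspec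
  convert hspec <;> ext i <;> simp [generic]

end BoundedLittlewood

section WeylDenominator

open Polynomial in
theorem dickson_two_monic_and_natDegree {R : Type*} [CommRing R] [Nontrivial R] (p : R) (k : ℕ) :
    (dickson 2 p k).Monic ∧ (dickson 2 p k).natDegree = k := by
  induction k using Nat.twoStepInduction with
  | zero =>
    have hone : dickson 2 p 0 = 1 := by norm_num [dickson_zero]
    exact hone ▸ ⟨monic_one, natDegree_one⟩
  | one => simp [dickson_one]
  | more k ih0 ih1 =>
    have hmonic : (X * dickson 2 p (k + 1)).Monic := monic_X.mul ih1.1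
    have hdeg : (X * dickson 2 p (k + 1)).natDegree = k + 2 := by
      rw [monic_X.natDegree_mul ih1.1, ih1.2, natDegree_X, add_comm, add_assoc]
    have hlt : (C p * dickson 2 p k).degree < (X * dickson 2 p (k + 1)).degree := by
      rw [degree_eq_natDegree hmonic.ne_zero, hdeg]
      refine degree_le_natDegree.trans_lt (Nat.cast_lt.mpr ?_)
      exact ((natDegree_C_mul_le p _).trans_eq ih0.2).trans_lt (by lia)
    rw [dickson_add_two]
    exact ⟨hmonic.sub_of_left hlt,
      (natDegree_eq_of_degree_eq (degree_sub_eq_left_of_degree_lt hlt)).trans hdeg⟩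

theorem eval_dickson_two_mul_sub {R : Type*} [CommRing R] (a b : R) (k : ℕ) :
    (Polynomial.dickson 2 (a * b) k).eval (a + b) * (a - b) = a ^ (k + 1) - b ^ (k + 1) := by
  induction k using Nat.twoStepInduction with
  | zero => norm_num [Polynomial.dickson_zero]
  | one => simp [Polynomial.dickson_one]; ring
  | more k ih0 ih1 =>
    simp only [Polynomial.dickson_add_two, Polynomial.eval_sub, Polynomial.eval_mul,
      Polynomial.eval_X, Polynomial.eval_C]
    linear_combination (a + b) * ih1 - a * b * ih0

/-- The Weyl denominator formula of type `C`; the usual form is the case `p = 1`. -/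
theorem det_pow_sub_pow {R : Type*} [CommRing R] {n : ℕ} {a b : Fin n → R} {p : R}
    (hp : ∀ j, a j * b j = p) :
    (Matrix.of fun i j : Fin n => a j ^ ((i : ℕ) + 1) - b j ^ ((i : ℕ) + 1)).det =
      (∏ j, (a j - b j)) * ∏ i, ∏ j ∈ Finset.Ioi i, (a j + b j - (a i + b i)) := by
  nontriviality R
  rw [← Matrix.det_vandermonde,
    Matrix.det_eval_matrixOfPolynomials_eq_det_vandermonde (fun j => a j + b j)
      (fun i : Fin n => Polynomial.dickson 2 p i)
      (fun i => (dickson_two_monic_and_natDegree p i).2)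
      (fun i => (dickson_two_monic_and_natDegree p i).1),
    ← Matrix.det_mul_column, ← Matrix.det_transpose]
  congr 1
  ext i j
  rw [Matrix.transpose_apply, Matrix.of_apply, Matrix.of_apply, Matrix.of_apply,
    ← eval_dickson_two_mul_sub, hp, mul_comm]

/-- The product `∏_{i ≤ j} (1 - q^{m+i+j+1})` over `0 ≤ i ≤ j < n`; up to a factor independent of
`m` it is the type `C` Weyl denominator at the principal specialisation. -/
def weylProduct {R : Type*} [CommRing R] (q : R) (n m : ℕ) : R :=
  ∏ i : Fin n, ∏ j ∈ Finset.Ici i, (1 - q ^ (m + (i : ℕ) + j + 1))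

theorem weylProduct_eq_prod_mul_prod_Ioi {R : Type*} [CommRing R] (q : R) (n m : ℕ) :
    weylProduct q n m = (∏ i : Fin n, (1 - q ^ (m + (i : ℕ) + i + 1))) *
      ∏ i : Fin n, ∏ j ∈ Finset.Ioi i, (1 - q ^ (m + (i : ℕ) + j + 1)) := by
  rw [weylProduct, ← Finset.prod_mul_distrib]
  refine Finset.prod_congr rfl fun i _ => ?_
  rw [← Finset.Ioi_insert, Finset.prod_insert (by simp)]

theorem rev_add_self_add_one {n : ℕ} (j : Fin n) : (j.rev : ℕ) + j + 1 = n := by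
  rw [Fin.val_rev]
  lia

theorem pow_rev_add_sub_pow_rev_add {R : Type*} [CommRing R] (q : R) (m : ℕ) {n : ℕ}
    {i j : Fin n} (hij : i < j) :
    q ^ (j.rev : ℕ) + q ^ (m + n + (j : ℕ)) - (q ^ (i.rev : ℕ) + q ^ (m + n + (i : ℕ))) =
      q ^ (j.rev : ℕ) * (1 - q ^ ((j : ℕ) - i)) * (1 - q ^ (m + (i : ℕ) + j + 1)) := by
  have hi := rev_add_self_add_one i
  have hj := rev_add_self_add_one j
  rw [show (i.rev : ℕ) = j.rev + (j - i) by lia,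
    show m + n + (i : ℕ) = j.rev + (m + i + j + 1) by lia,
    show m + n + (j : ℕ) = j.rev + ((j - i) + (m + i + j + 1)) by lia]
  ring

theorem det_littlewoodMatrix_principal {R : Type*} [CommRing R] (q : R) (n m : ℕ) :
    (littlewoodMatrix (m + n) fun i : Fin n => q ^ ((i : ℕ) + 1)).det =
      ((∏ j : Fin n, q ^ (j.rev : ℕ)) *
        ∏ i : Fin n, ∏ j ∈ Finset.Ioi i, (q ^ (j.rev : ℕ) * (1 - q ^ ((j : ℕ) - i)))) *
          weylProduct q n m := by
  have hmat : littlewoodMatrix (m + n) (fun i : Fin n => q ^ ((i : ℕ) + 1)) =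
      Matrix.of fun i j : Fin n => (q ^ (j.rev : ℕ)) ^ ((i : ℕ) + 1) -
        (q ^ (m + n + (j : ℕ))) ^ ((i : ℕ) + 1) := by
    ext i j
    simp only [littlewoodMatrix, Matrix.of_apply, pow_right_comm q (_ + 1)]
  have hprod (j : Fin n) : q ^ (j.rev : ℕ) * q ^ (m + n + (j : ℕ)) = q ^ (m + 2 * n - 1) := by
    have hj := rev_add_self_add_one j
    rw [← pow_add]
    congr 1
    lia
  have hdiff (j : Fin n) : q ^ (j.rev : ℕ) - q ^ (m + n + (j : ℕ)) =
      q ^ (j.rev : ℕ) * (1 - q ^ (m + (j : ℕ) + j + 1)) := by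
    have hj := rev_add_self_add_one j
    rw [mul_one_sub, ← pow_add]
    congr 2
    lia
  have hpair (i j : Fin n) (hij : j ∈ Finset.Ioi i) :=
    pow_rev_add_sub_pow_rev_add q m (Finset.mem_Ioi.mp hij)
  rw [hmat, det_pow_sub_pow hprod, weylProduct_eq_prod_mul_prod_Ioi,
    Finset.prod_congr rfl fun j _ => hdiff j,
    Finset.prod_congr rfl fun i _ => Finset.prod_congr rfl (hpair i)]
  simp only [Finset.prod_mul_distrib]
  ring

end WeylDenominator

section StrictPatterns

/-- Strict Gelfand–Tsetlin patterns of order `n`: triangular arrays of natural numbers with rows of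
lengths `n, n - 1, …, 1`, each interlacing the next one, weakly on one side and strictly on the
other. The `i`-th entry of the `d`-th row is `h d i`, and the entries with `n ≤ d + i`, which are
not part of the triangle, are set to zero. -/
structure IsStrictPattern {n : ℕ} (h : Fin n → Fin n → ℕ) : Prop where
  right_le_below : ∀ d i (hdi : d + i + 1 < n),
    h ⟨d, by lia⟩ ⟨i + 1, by lia⟩ ≤ h ⟨d + 1, by lia⟩ ⟨i, by lia⟩
  below_lt : ∀ d i (hdi : d + i + 1 < n),
    h ⟨d + 1, by lia⟩ ⟨i, by lia⟩ < h ⟨d, by lia⟩ ⟨i, by lia⟩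
  eq_zero : ∀ d i : Fin n, n ≤ d + i → h d i = 0

/-- The first row of a triangular array. -/
def topRow {n : ℕ} (h : Fin n → Fin n → ℕ) : Fin n → ℕ := fun i => h ⟨0, i.pos⟩ i

/-- The triangular array obtained by putting the row `l` on top of `h`. -/
def consRow {n : ℕ} (l : Fin (n + 1) → ℕ) (h : Fin n → Fin n → ℕ) :
    Fin (n + 1) → Fin (n + 1) → ℕ :=
  Fin.cons l fun d => Fin.snoc (h d) 0

/-- The triangular array obtained by deleting the top row of `h`. -/
def tailRows {n : ℕ} (h : Fin (n + 1) → Fin (n + 1) → ℕ) : Fin n → Fin n → ℕ :=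
  fun d i => h d.succ i.castSucc

theorem consRow_succ_castSucc {n : ℕ} (l : Fin (n + 1) → ℕ) (h : Fin n → Fin n → ℕ)
    (d i : Fin n) : consRow l h d.succ i.castSucc = h d i := by
  simp [consRow]

theorem tailRows_consRow {n : ℕ} (l : Fin (n + 1) → ℕ) (h : Fin n → Fin n → ℕ) :
    tailRows (consRow l h) = h := by
  ext d i
  exact consRow_succ_castSucc l h d i

theorem IsStrictPattern.consRow_tailRows {n : ℕ} {h : Fin (n + 1) → Fin (n + 1) → ℕ}
    (hh : IsStrictPattern h) : consRow (topRow h) (tailRows h) = h := by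
  ext d i
  cases d using Fin.cases with
  | zero => rfl
  | succ d =>
    cases i using Fin.lastCases with
    | last => simpa [consRow] using (hh.eq_zero d.succ (Fin.last n) (by simp)).symm
    | cast i => exact consRow_succ_castSucc _ _ d i

theorem isStrictPattern_consRow_iff {n : ℕ} {l : Fin (n + 1) → ℕ} {h : Fin n → Fin n → ℕ} :
    IsStrictPattern (consRow l h) ↔
      IsStrictPattern h ∧ ∀ i, l i.succ ≤ topRow h i ∧ topRow h i < l i.castSucc := by
  have hcons (d i : ℕ) (hd : d < n) (hi : i < n) :
      consRow l h ⟨d + 1, by lia⟩ ⟨i, by lia⟩ = h ⟨d, hd⟩ ⟨i, hi⟩ :=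
    consRow_succ_castSucc l h ⟨d, hd⟩ ⟨i, hi⟩
  constructor
  · rintro ⟨hle, hlt, hzero⟩
    refine ⟨⟨fun d i hdi => ?_, fun d i hdi => ?_, fun d i hdi => ?_⟩, fun i => ⟨?_, ?_⟩⟩
    · rw [← hcons, ← hcons]
      exact hle (d + 1) i (by lia)
    · rw [← hcons, ← hcons]
      exact hlt (d + 1) i (by lia)
    · rw [← consRow_succ_castSucc l h]
      exact hzero _ _ (by simp; lia)
    · rw [topRow, ← hcons]
      exact hle 0 i (by lia)
    · rw [topRow, ← hcons]
      exact hlt 0 i (by lia)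
  · rintro ⟨⟨hle, hlt, hzero⟩, hl⟩
    refine ⟨fun d i hdi => ?_, fun d i hdi => ?_, fun d i hdi => ?_⟩
    · rcases d with _ | d
      · exact (hl ⟨i, by lia⟩).1.trans_eq (hcons 0 i (by lia) (by lia)).symm
      · rw [hcons _ _ (by lia) (by lia), hcons _ _ (by lia) (by lia)]
        exact hle d i (by lia)
    · rcases d with _ | d
      · exact (hcons 0 i (by lia) (by lia)).trans_lt (hl ⟨i, by lia⟩).2
      · rw [hcons _ _ (by lia) (by lia), hcons _ _ (by lia) (by lia)]
        exact hlt d i (by lia)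
    · cases d using Fin.cases with
      | zero => exact absurd hdi (by simp; lia)
      | succ d =>
        cases i using Fin.lastCases with
        | last => simp [consRow]
        | cast i => exact (consRow_succ_castSucc l h d i).trans (hzero d i (by simp at hdi; lia))

theorem sum_consRow {n : ℕ} (l : Fin (n + 1) → ℕ) (h : Fin n → Fin n → ℕ) :
    ∑ d, ∑ i, consRow l h d i = ∑ i, l i + ∑ d, ∑ i, h d i := by
  rw [Fin.sum_univ_succ]
  simp [consRow, Fin.sum_univ_castSucc (Fin.snoc _ _)]

theorem topRow_consRow {n : ℕ} (l : Fin (n + 1) → ℕ) (h : Fin n → Fin n → ℕ) :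
    topRow (consRow l h) = l := rfl

theorem IsStrictPattern.strictAnti_topRow {n : ℕ} {h : Fin n → Fin n → ℕ}
    (hh : IsStrictPattern h) : StrictAnti (topRow h) := by
  cases n with
  | zero => exact Subsingleton.strictAnti _
  | succ n =>
    refine Fin.strictAnti_iff_succ_lt.mpr fun i => ?_
    exact (hh.right_le_below 0 i (by lia)).trans_lt (hh.below_lt 0 i (by lia))

/-- The strict patterns of order `n` with entries less than `N`. -/
noncomputable def strictPatterns (n N : ℕ) : Finset (Fin n → Fin n → ℕ) :=
  (Fintype.piFinset fun _ => Fintype.piFinset fun _ => Finset.range N).filter IsStrictPattern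

theorem mem_strictPatterns {n N : ℕ} {h : Fin n → Fin n → ℕ} :
    h ∈ strictPatterns n N ↔ (∀ d i, h d i < N) ∧ IsStrictPattern h := by
  simp [strictPatterns]

theorem strictPatterns_zero (N : ℕ) : strictPatterns 0 N = Finset.univ :=
  Finset.eq_univ_of_forall fun _ => mem_strictPatterns.mpr ⟨nofun, nofun, nofun, nofun⟩

theorem consRow_mem_strictPatterns {n N : ℕ} {l : Fin (n + 1) → ℕ} {h : Fin n → Fin n → ℕ}
    (hl : ∀ i, l i < N) :
    consRow l h ∈ strictPatterns (n + 1) N ↔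
      h ∈ strictPatterns n N ∧
        topRow h ∈ Fintype.piFinset fun i => Finset.Ico (l i.succ) (l i.castSucc) := by
  have hN := (Nat.zero_le _).trans_lt (hl 0)
  simp only [mem_strictPatterns, isStrictPattern_consRow_iff, Fintype.mem_piFinset,
    Finset.mem_Ico, and_assoc]
  refine and_congr_left fun _ => ⟨fun hlt d i => ?_, fun hlt d i => ?_⟩
  · exact consRow_succ_castSucc l h d i ▸ hlt d.succ i.castSucc
  · cases d using Fin.cases with
    | zero => exact hl i
    | succ d =>
      cases i using Fin.lastCases with
      | last => simpa [consRow] using hN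
      | cast i => exact (consRow_succ_castSucc l h d i).trans_lt (hlt d i)

variable {R : Type*} [CommRing R]

/-- The generating function by sum of entries of the strict patterns with top row `l` and entries
less than `N`. -/
noncomputable def patternSum (q : R) (N : ℕ) {n : ℕ} (l : Fin n → ℕ) : R :=
  ∑ h ∈ strictPatterns n N with topRow h = l, q ^ ∑ d, ∑ i, h d i

theorem patternSum_succ (q : R) {N n : ℕ} {l : Fin (n + 1) → ℕ} (hl : ∀ i, l i < N) :
    patternSum q N l = q ^ (∑ i, l i) *
      ∑ μ ∈ Fintype.piFinset (fun i : Fin n => Finset.Ico (l i.succ) (l i.castSucc)),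
        patternSum q N μ := by
  simp only [patternSum]
  rw [Finset.sum_fiberwise_eq_sum_filter, Finset.mul_sum]
  have cons_tail (h : Fin (n + 1) → Fin (n + 1) → ℕ)
      (hh : h ∈ (strictPatterns (n + 1) N).filter (topRow · = l)) :
      consRow l (tailRows h) = h := by
    rw [Finset.mem_filter, mem_strictPatterns] at hh
    exact hh.2 ▸ hh.1.2.consRow_tailRows
  refine Finset.sum_bij' (fun h _ => tailRows h) (fun h _ => consRow l h)
    (fun h hh => ?_) (fun h hh => ?_) cons_tail (fun h _ => tailRows_consRow l h)
    (fun h hh => ?_)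
  · rw [Finset.mem_filter, ← consRow_mem_strictPatterns hl, cons_tail h hh]
    exact (Finset.mem_filter.mp hh).1
  · exact Finset.mem_filter.mpr
      ⟨(consRow_mem_strictPatterns hl).mpr (Finset.mem_filter.mp hh), topRow_consRow l h⟩
  · rw [← pow_add, ← sum_consRow, cons_tail h hh]

theorem sum_strictPatterns (q : R) (n N : ℕ) :
    ∑ h ∈ strictPatterns n N, q ^ (∑ d, ∑ i, h d i) =
      ∑ l ∈ decreasingTuples n N, patternSum q N l := by
  refine (Finset.sum_fiberwise_of_maps_to (fun h hh => ?_) _).symm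
  rw [mem_strictPatterns] at hh
  exact mem_decreasingTuples.mpr ⟨fun i => hh.1 _ i, hh.2.strictAnti_topRow⟩

end StrictPatterns

section PatternDeterminants

variable {R : Type*} [CommRing R]

theorem det_eq_det_sub_of_row_zero_eq_one {n : ℕ} {M : Matrix (Fin (n + 1)) (Fin (n + 1)) R}
    (hM : ∀ j, M 0 j = 1) :
    M.det = (Matrix.of fun i j : Fin n => M i.succ j.succ - M i.succ j.castSucc).det := by
  rw [Matrix.det_eq_of_forall_col_eq_smul_add_pred (A := M) (c := fun _ => 1)
    (B := Matrix.of fun i => Fin.cons (M i 0) fun j => M i j.succ - M i j.castSucc)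
    (fun i => by simp) (fun i j => by simp), Matrix.det_succ_row_zero, Fin.sum_univ_succ,
    Finset.sum_eq_zero fun j _ => by simp [hM]]
  simp only [Matrix.of_apply, Fin.cons_zero, Fin.val_zero, pow_zero, hM, one_mul, add_zero]
  rfl

theorem det_sub_eq_prod_mul_sum_det {n : ℕ} (x : Fin n → R) {l : Fin (n + 1) → ℕ}
    (hl : Antitone l) :
    (Matrix.of fun i j : Fin n => x i ^ l j.succ - x i ^ l j.castSucc).det =
      (∏ i, (1 - x i)) *
        ∑ μ ∈ Fintype.piFinset (fun j : Fin n => Finset.Ico (l j.succ) (l j.castSucc)),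
          (Matrix.of fun i j => x i ^ μ j).det := by
  have hgeom : (Matrix.of fun i j : Fin n => x i ^ l j.succ - x i ^ l j.castSucc) =
      Matrix.of fun i j : Fin n => (1 - x i) *
        (Matrix.of fun (j : Fin n) i =>
          ∑ t ∈ Finset.Ico (l j.succ) (l j.castSucc), x i ^ t).transpose i j := by
    ext i j
    simp only [Matrix.of_apply, Matrix.transpose_apply]
    rw [← geom_sum_Ico_mul_neg _ (hl j.castSucc_lt_succ.le), mul_comm]
  rw [hgeom, Matrix.det_mul_column, Matrix.det_transpose, det_sum_row]
  exact congrArg _ (Finset.sum_congr rfl fun μ _ => Matrix.det_transpose _)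

theorem det_pow_add_one_pow (q : R) {n : ℕ} (l : Fin n → ℕ) :
    (Matrix.of fun i j : Fin n => (q ^ ((i : ℕ) + 1)) ^ l j).det =
      q ^ (∑ i, l i) * (Matrix.of fun i j : Fin n => (q ^ (i : ℕ)) ^ l j).det := by
  rw [← Finset.prod_pow_eq_pow_sum, ← Matrix.det_mul_row]
  congr 1
  ext i j
  simp only [Matrix.of_apply]
  ring

/-- At `x i = q ^ i` the alternant has a row of ones, so subtracting adjacent columns expresses it
through the alternants of the interlacing exponent vectors. -/
theorem prod_mul_patternSum (q : R) (N : ℕ) {n : ℕ} {l : Fin n → ℕ}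
    (hl : l ∈ decreasingTuples n N) :
    (∏ k ∈ Finset.range n, ∏ i : Fin k, (1 - q ^ ((i : ℕ) + 1))) * patternSum q N l =
      (Matrix.of fun i j : Fin n => (q ^ ((i : ℕ) + 1)) ^ l j).det := by
  induction n with
  | zero =>
    simp [patternSum, strictPatterns_zero, Finset.filter_true_of_mem, Subsingleton.elim _ l]
  | succ n ih =>
    rw [mem_decreasingTuples] at hl
    have hmem : ∀ μ ∈ Fintype.piFinset (fun j : Fin n => Finset.Ico (l j.succ) (l j.castSucc)),
        μ ∈ decreasingTuples n N := fun μ hμ => by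
      simp only [Fintype.mem_piFinset, Finset.mem_Ico] at hμ
      refine mem_decreasingTuples.mpr ⟨fun i => (hμ i).2.trans (hl.1 _), fun i j hij => ?_⟩
      exact (hμ j).2.trans_le <|
        (hl.2.antitone (Fin.succ_le_castSucc_iff.mpr hij)).trans (hμ i).1
    rw [det_pow_add_one_pow, det_eq_det_sub_of_row_zero_eq_one fun j => by simp]
    simp only [Matrix.of_apply, Fin.val_succ]
    rw [det_sub_eq_prod_mul_sum_det _ hl.2.antitone,
      ← Finset.sum_congr rfl fun μ hμ => ih (hmem μ hμ), ← Finset.mul_sum,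
      patternSum_succ q hl.1, Finset.prod_range_succ]
    ring

theorem sum_strictPatterns_eq (q : R) (n m : ℕ) :
    (∏ k ∈ Finset.range n, ∏ i : Fin k, (1 - q ^ ((i : ℕ) + 1))) *
        (∑ h ∈ strictPatterns n (m + n), q ^ ∑ d, ∑ i, h d i) *
          littlewoodDenom (fun i : Fin n => q ^ ((i : ℕ) + 1)) =
      ((∏ j : Fin n, q ^ (j.rev : ℕ)) *
        ∏ i : Fin n, ∏ j ∈ Finset.Ioi i, (q ^ (j.rev : ℕ) * (1 - q ^ ((j : ℕ) - i)))) *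
          weylProduct q n m := by
  rw [← det_littlewoodMatrix_principal, ← alternantSum_mul_littlewoodDenom, alternantSum,
    sum_strictPatterns, Finset.mul_sum, Finset.sum_congr rfl fun l hl => prod_mul_patternSum q _ hl]

end PatternDeterminants

section ColumnHeights

/-- The height of the column of `P` over the point `(i, j)`. -/
def columnHeight (P : Finset (ℕ × ℕ × ℕ)) (i j : ℕ) : ℕ :=
  {p ∈ P | p.1 = i ∧ p.2.1 = j}.sup fun p => p.2.2

theorem columnHeight_le {P : Finset (ℕ × ℕ × ℕ)} {n₁ n₂ m : ℕ} (hbox : P ⊆ ppBox n₁ n₂ m)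
    (i j : ℕ) : columnHeight P i j ≤ m := by
  refine Finset.sup_le fun p hp => ?_
  have := hbox (Finset.mem_filter.mp hp).1
  simp only [ppBox, Finset.mem_product, Finset.mem_Icc] at this
  exact this.2.2.2

namespace IsPlanePartition

variable {P : Finset (ℕ × ℕ × ℕ)}

theorem mem_iff_le_columnHeight (hP : IsPlanePartition P) {i j k : ℕ} :
    (i, j, k) ∈ P ↔ 1 ≤ k ∧ k ≤ columnHeight P i j := by
  constructor
  · exact fun h => ⟨(hP.1 _ h).2.2,
      Finset.le_sup (f := fun p : ℕ × ℕ × ℕ => p.2.2) (Finset.mem_filter.mpr ⟨h, rfl, rfl⟩)⟩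
  · rintro ⟨hk, hle⟩
    obtain ⟨⟨i, j, t⟩, ht, hkt⟩ := (Finset.le_sup_iff (Nat.lt_of_succ_le hk)).mp hle
    simp only [Finset.mem_filter] at ht
    obtain ⟨ht, rfl, rfl⟩ := ht
    have hpos := hP.1 _ ht
    exact hP.2 _ ht _ _ _ hpos.1 le_rfl hpos.2.1 le_rfl hk hkt

theorem columnHeight_eq (hP : IsPlanePartition P) {i j c : ℕ}
    (h : ∀ k, 1 ≤ k → ((i, j, k) ∈ P ↔ k ≤ c)) : columnHeight P i j = c := by
  refine eq_of_forall_le_iff fun k => ?_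
  rcases Nat.eq_zero_or_pos k with rfl | hk
  · simp
  · rw [← h k hk, hP.mem_iff_le_columnHeight, and_iff_right (show 1 ≤ k from hk)]

theorem columnHeight_anti (hP : IsPlanePartition P) {i i' j j' : ℕ} (hi : 1 ≤ i) (hii' : i ≤ i')
    (hj : 1 ≤ j) (hjj' : j ≤ j') : columnHeight P i' j' ≤ columnHeight P i j := by
  rcases Nat.eq_zero_or_pos (columnHeight P i' j') with h0 | hpos
  · exact h0 ▸ Nat.zero_le _
  · have hmem := hP.mem_iff_le_columnHeight.mpr ⟨hpos, le_rfl⟩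
    exact (hP.mem_iff_le_columnHeight.mp (hP.2 _ hmem _ _ _ hi hii' hj hjj' hpos le_rfl)).2

end IsPlanePartition

theorem columnHeight_eq_zero {P : Finset (ℕ × ℕ × ℕ)} {n₁ n₂ m : ℕ} (hbox : P ⊆ ppBox n₁ n₂ m)
    {i j : ℕ} (hj : n₂ < j) : columnHeight P i j = 0 := by
  rw [columnHeight, Finset.filter_false_of_mem, Finset.sup_empty, Nat.bot_eq_zero]
  rintro p hp ⟨-, rfl⟩
  have := hbox hp
  simp only [ppBox, Finset.mem_product, Finset.mem_Icc] at this
  lia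

theorem IsSymmetricPP.orbitCount_eq_card {P : Finset (ℕ × ℕ × ℕ)} (hP : IsSymmetricPP P) :
    orbitCount P = {p ∈ P | p.1 ≤ p.2.1}.card := by
  have hinj : Set.InjOn (fun p : ℕ × ℕ × ℕ => ({p, (p.2.1, p.1, p.2.2)} : Finset (ℕ × ℕ × ℕ)))
      {p ∈ P | p.1 ≤ p.2.1} := by
    rintro ⟨i, j, k⟩ hp ⟨i', j', k'⟩ hp' heq
    have hmem : (i, j, k) ∈ ({(i', j', k'), (j', i', k')} : Finset (ℕ × ℕ × ℕ)) :=
      (Finset.ext_iff.mp heq _).mp (Finset.mem_insert_self _ _)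
    simp only [Finset.mem_insert, Finset.mem_singleton, Prod.mk.injEq] at hmem ⊢
    have hij : i ≤ j := hp.2
    have hij' : i' ≤ j' := hp'.2
    lia
  rw [orbitCount, ← Finset.card_image_of_injOn (s := {p ∈ P | p.1 ≤ p.2.1}) (by simpa using hinj)]
  congr 1
  refine (Finset.image_subset_iff.mpr ?_).antisymm
    (Finset.image_subset_image (Finset.filter_subset _ _))
  rintro ⟨i, j, k⟩ hp
  rw [Finset.mem_image]
  rcases le_total i j with h | h
  · exact ⟨(i, j, k), Finset.mem_filter.mpr ⟨hp, h⟩, rfl⟩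
  · exact ⟨(j, i, k), Finset.mem_filter.mpr ⟨(hP i j k).mp hp, h⟩, Finset.pair_comm _ _⟩

theorem IsPlanePartition.orbitCount_eq_sum {P : Finset (ℕ × ℕ × ℕ)} (hP : IsPlanePartition P)
    (hsymm : IsSymmetricPP P) {n m : ℕ} (hbox : P ⊆ ppBox n n m) :
    orbitCount P = ∑ d : Fin n, ∑ i : Fin n, columnHeight P (i + 1) (d + i + 1) := by
  rw [hsymm.orbitCount_eq_card, ← Fintype.sum_prod_type']
  trans (Finset.univ.sigma fun x : Fin n × Fin n =>
    Finset.Icc 1 (columnHeight P (x.2 + 1) (x.1 + x.2 + 1))).card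
  · refine (Finset.card_bij (fun x _ => ((x.1.2 + 1, x.1.1 + x.1.2 + 1, x.2) : ℕ × ℕ × ℕ))
      ?_ ?_ ?_).symm
    · rintro ⟨⟨d, i⟩, k⟩ hk
      simp only [Finset.mem_sigma, Finset.mem_univ, true_and, Finset.mem_Icc] at hk
      exact Finset.mem_filter.mpr ⟨hP.mem_iff_le_columnHeight.mpr hk, by lia⟩
    · rintro ⟨⟨d, i⟩, k⟩ - ⟨⟨d', i'⟩, k'⟩ - heq
      simp only [Prod.mk.injEq] at heq
      obtain rfl : d = d' := Fin.ext (by lia)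
      obtain rfl : i = i' := Fin.ext (by lia)
      simp [heq.2.2]
    · rintro ⟨i, j, k⟩ hp
      obtain ⟨hp, hij⟩ := Finset.mem_filter.mp hp
      have hb := hbox hp
      simp only [ppBox, Finset.mem_product, Finset.mem_Icc] at hb hij
      have hcoord : (i - 1 + 1, j - i + (i - 1) + 1, k) = (i, j, k) := by
        simp only [Prod.mk.injEq, and_true]
        lia
      refine ⟨⟨(⟨j - i, by lia⟩, ⟨i - 1, by lia⟩), k⟩, ?_, hcoord⟩
      simp only [Finset.mem_sigma, Finset.mem_univ, true_and, Finset.mem_Icc]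
      rwa [← hP.mem_iff_le_columnHeight, hcoord]
  · simp

end ColumnHeights

section SymmetricPlanePartitions

/-- The symmetric plane partitions in the box `B(n, n, m)`. -/
noncomputable def symmetricPPs (n m : ℕ) : Finset (Finset (ℕ × ℕ × ℕ)) :=
  (ppBox n n m).powerset.filter fun P => IsPlanePartition P ∧ IsSymmetricPP P

theorem mem_symmetricPPs {n m : ℕ} {P : Finset (ℕ × ℕ × ℕ)} :
    P ∈ symmetricPPs n m ↔ P ⊆ ppBox n n m ∧ IsPlanePartition P ∧ IsSymmetricPP P := by
  rw [symmetricPPs, Finset.mem_filter, Finset.mem_powerset]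

/-- The triangular array formed by the diagonals of a plane partition in `B(n, n, m)`, on and above
the main diagonal, made strict by adding a staircase. Outside the triangle the subtraction truncates
to zero and the columns are empty. -/
def toPattern (n : ℕ) (P : Finset (ℕ × ℕ × ℕ)) (d i : Fin n) : ℕ :=
  columnHeight P (i + 1) (d + i + 1) + (n - 1 - (d + i))

theorem toPattern_mem_strictPatterns {n m : ℕ} {P : Finset (ℕ × ℕ × ℕ)}
    (hP : P ∈ symmetricPPs n m) : toPattern n P ∈ strictPatterns n (m + n) := by
  obtain ⟨hbox, hpp, -⟩ := mem_symmetricPPs.mp hP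
  refine mem_strictPatterns.mpr ⟨fun d i => ?_, fun d i hdi => ?_, fun d i hdi => ?_,
    fun d i hdi => ?_⟩
  · have := columnHeight_le hbox (i + 1) (d + i + 1)
    have := i.isLt
    simp only [toPattern]
    lia
  · refine add_le_add (hpp.columnHeight_anti ?_ ?_ ?_ ?_) ?_ <;> simp only <;> lia
  · refine add_lt_add_of_le_of_lt (hpp.columnHeight_anti ?_ ?_ ?_ ?_) ?_ <;> simp only <;> lia
  · rw [toPattern, columnHeight_eq_zero hbox (by lia)]
    lia

/-- The entry `h d i` minus the staircase entry added in `toPattern`, extended by zero to all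
natural numbers `d` and `i`. -/
def patternHeight {n : ℕ} (h : Fin n → Fin n → ℕ) (d i : ℕ) : ℕ :=
  if hdi : d + i < n then h ⟨d, by lia⟩ ⟨i, by lia⟩ - (n - 1 - (d + i)) else 0

theorem IsStrictPattern.staircase_le {n : ℕ} {h : Fin n → Fin n → ℕ} (hh : IsStrictPattern h)
    (d i : Fin n) : n - 1 - (d + i) ≤ h d i := by
  generalize hs : n - 1 - ((d : ℕ) + i) = s
  induction s generalizing d with
  | zero => exact Nat.zero_le _
  | succ s ih =>
    exact (ih ⟨d + 1, by lia⟩ (by simp only; lia)).trans_lt (hh.below_lt d i (by lia))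

theorem IsStrictPattern.patternHeight_add_staircase {n : ℕ} {h : Fin n → Fin n → ℕ}
    (hh : IsStrictPattern h) (d i : Fin n) : patternHeight h d i + (n - 1 - (d + i)) = h d i := by
  rcases lt_or_ge ((d : ℕ) + i) n with hdi | hdi
  · rw [patternHeight, dif_pos hdi, Nat.sub_add_cancel (hh.staircase_le d i)]
  · rw [patternHeight, dif_neg hdi.not_gt, hh.eq_zero d i hdi]
    lia

theorem IsStrictPattern.patternHeight_anti {n : ℕ} {h : Fin n → Fin n → ℕ}
    (hh : IsStrictPattern h) {d d' i i' : ℕ} (hi : i ≤ i') (hdi : d + i ≤ d' + i') :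
    patternHeight h d' i' ≤ patternHeight h d i := by
  have hright (d i : ℕ) : patternHeight h d (i + 1) ≤ patternHeight h (d + 1) i := by
    simp only [patternHeight]
    split_ifs with h1 h2 <;> try lia
    have := hh.right_le_below d i (by lia)
    lia
  have hbelow (i : ℕ) : Antitone (patternHeight h · i) := antitone_nat_of_succ_le fun d => by
    simp only [patternHeight]
    split_ifs with h1 h2 <;> try lia
    have := hh.below_lt d i (by lia)
    lia
  induction i', hi using Nat.le_induction generalizing d' with
  | base => exact hbelow i (by lia)
  | succ i' _ ih => exact (hright d' i').trans (ih (by lia))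

theorem patternHeight_toPattern {n m : ℕ} {P : Finset (ℕ × ℕ × ℕ)} (hbox : P ⊆ ppBox n n m)
    (d i : ℕ) : patternHeight (toPattern n P) d i = columnHeight P (i + 1) (d + i + 1) := by
  rw [patternHeight]
  split_ifs with hdi
  · exact Nat.add_sub_cancel _ _
  · rw [columnHeight_eq_zero hbox (by lia)]

/-- The symmetric set of points in `B(n, n, m)` whose diagonals are recorded by `h`, the inverse of
`toPattern`. -/
def ofPattern {n : ℕ} (m : ℕ) (h : Fin n → Fin n → ℕ) : Finset (ℕ × ℕ × ℕ) :=
  {p ∈ ppBox n n m | p.2.2 ≤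
    patternHeight h (max p.1 p.2.1 - min p.1 p.2.1) (min p.1 p.2.1 - 1)}

theorem mem_ofPattern {n m : ℕ} {h : Fin n → Fin n → ℕ} {i j k : ℕ} :
    (i, j, k) ∈ ofPattern m h ↔ ((1 ≤ i ∧ i ≤ n) ∧ (1 ≤ j ∧ j ≤ n) ∧ 1 ≤ k ∧ k ≤ m) ∧
      k ≤ patternHeight h (max i j - min i j) (min i j - 1) := by
  simp only [ofPattern, ppBox, Finset.mem_filter, Finset.mem_product, Finset.mem_Icc]

theorem ofPattern_mem_symmetricPPs {n : ℕ} {h : Fin n → Fin n → ℕ} (hh : IsStrictPattern h)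
    (m : ℕ) : ofPattern m h ∈ symmetricPPs n m := by
  refine mem_symmetricPPs.mpr ⟨Finset.filter_subset _ _, ⟨?_, ?_⟩, fun i j k => ?_⟩
  · rintro ⟨i, j, k⟩ hp
    have := mem_ofPattern.mp hp
    exact ⟨this.1.1.1, this.1.2.1.1, this.1.2.2.1⟩
  · rintro ⟨r, s, t⟩ hp i j k hi hir hj hjs hk hkt
    have hp := mem_ofPattern.mp hp
    dsimp only at hir hjs hkt
    refine mem_ofPattern.mpr ⟨by lia, hkt.trans (hp.2.trans (hh.patternHeight_anti ?_ ?_))⟩ <;> lia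
  · rw [mem_ofPattern, mem_ofPattern, max_comm, min_comm, and_left_comm]

theorem ofPattern_toPattern {n m : ℕ} {P : Finset (ℕ × ℕ × ℕ)} (hP : P ∈ symmetricPPs n m) :
    ofPattern m (toPattern n P) = P := by
  obtain ⟨hbox, hpp, hsymm⟩ := mem_symmetricPPs.mp hP
  ext ⟨i, j, k⟩
  have hmem : (min i j, max i j, k) ∈ P ↔ (i, j, k) ∈ P := by
    rcases le_total i j with h | h
    · rw [min_eq_left h, max_eq_right h]
    · rw [min_eq_right h, max_eq_left h, hsymm]
  have hsub := @hbox (i, j, k)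
  simp only [ppBox, Finset.mem_product, Finset.mem_Icc] at hsub
  rw [mem_ofPattern, patternHeight_toPattern hbox]
  constructor
  · rintro ⟨hb, hk⟩
    rw [← hmem, hpp.mem_iff_le_columnHeight]
    refine ⟨hb.2.2.1, hk.trans_eq ?_⟩
    congr 1 <;> lia
  · intro hp
    have hb := hsub hp
    rw [← hmem, hpp.mem_iff_le_columnHeight] at hp
    refine ⟨hb, hp.2.trans_eq ?_⟩
    congr 1 <;> lia

theorem toPattern_ofPattern {n m : ℕ} {h : Fin n → Fin n → ℕ} (hh : h ∈ strictPatterns n (m + n)) :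
    toPattern n (ofPattern m h) = h := by
  rw [mem_strictPatterns] at hh
  obtain ⟨hlt, hh⟩ := hh
  have hpp := (mem_symmetricPPs.mp (ofPattern_mem_symmetricPPs hh m)).2.1
  ext d i
  rw [← hh.patternHeight_add_staircase, toPattern, Nat.add_right_cancel_iff]
  refine hpp.columnHeight_eq fun k hk => ?_
  rw [mem_ofPattern, max_eq_right (by lia), min_eq_left (by lia), Nat.add_sub_cancel,
    show (d : ℕ) + i + 1 - (i + 1) = d by lia, and_iff_right_iff_imp]
  intro hle
  have h00 : patternHeight h 0 0 ≤ m := by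
    have := hlt ⟨0, d.pos⟩ ⟨0, d.pos⟩
    have := d.pos
    rw [patternHeight, dif_pos (by lia)]
    lia
  have hdi : (d : ℕ) + i < n := by
    by_contra hdi
    rw [patternHeight, dif_neg hdi] at hle
    lia
  have := hh.patternHeight_anti (d := 0) (i := 0) (Nat.zero_le i) (Nat.zero_le (d + i))
  lia

theorem sum_strictPatterns_eq_sum_symmetricPPs {R : Type*} [CommSemiring R] (q : R) (n m : ℕ) :
    ∑ h ∈ strictPatterns n (m + n), q ^ ∑ d, ∑ i, h d i =
      q ^ (∑ d : Fin n, ∑ i : Fin n, (n - 1 - ((d : ℕ) + i))) *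
        ∑ P ∈ symmetricPPs n m, q ^ orbitCount P := by
  rw [Finset.mul_sum]
  refine (Finset.sum_bij' (fun P _ => toPattern n P) (fun h _ => ofPattern m h)
    (fun P hP => toPattern_mem_strictPatterns hP) (fun h hh => ?_)
    (fun P hP => ofPattern_toPattern hP) (fun h hh => toPattern_ofPattern hh) fun P hP => ?_).symm
  · rw [mem_strictPatterns] at hh
    exact ofPattern_mem_symmetricPPs hh.2 m
  · obtain ⟨hbox, hpp, hsymm⟩ := mem_symmetricPPs.mp hP
    rw [hpp.orbitCount_eq_sum hsymm hbox, ← pow_add, add_comm]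
    simp only [toPattern, Finset.sum_add_distrib]

end SymmetricPlanePartitions

section OrbitProduct

theorem symmetricPPs_zero (n : ℕ) : symmetricPPs n 0 = {∅} := by
  ext P
  simp only [mem_symmetricPPs, ppBox, Finset.Icc_eq_empty_of_lt Nat.zero_lt_one,
    Finset.product_empty, Finset.subset_empty, Finset.mem_singleton, and_iff_left_iff_imp]
  rintro rfl
  simp [IsPlanePartition, IsSymmetricPP]

theorem weylProduct_zero_mul_sum_symmetricPPs {R : Type*} [CommRing R] [IsDomain R] {q : R}
    (hq₀ : q ≠ 0) (hq : ∀ k : ℕ, k ≠ 0 → 1 - q ^ k ≠ 0) (n m : ℕ) :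
    weylProduct q n 0 * ∑ P ∈ symmetricPPs n m, q ^ orbitCount P = weylProduct q n m := by
  have hc : ((∏ j : Fin n, q ^ (j.rev : ℕ)) *
      ∏ i : Fin n, ∏ j ∈ Finset.Ioi i, (q ^ (j.rev : ℕ) * (1 - q ^ ((j : ℕ) - i)))) ≠ 0 := by
    refine mul_ne_zero (Finset.prod_ne_zero_iff.mpr fun j _ => pow_ne_zero _ hq₀)
      (Finset.prod_ne_zero_iff.mpr fun i _ => Finset.prod_ne_zero_iff.mpr fun j hij => ?_)
    have hlt : i < j := Finset.mem_Ioi.mp hij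
    exact mul_ne_zero (pow_ne_zero _ hq₀) (hq _ (Nat.sub_ne_zero_of_lt hlt))
  have hsum (m : ℕ) := sum_strictPatterns_eq q n m
  simp only [sum_strictPatterns_eq_sum_symmetricPPs] at hsum
  have hzero : ∑ P ∈ symmetricPPs n 0, q ^ orbitCount P = 1 := by
    simp [symmetricPPs_zero, orbitCount]
  refine mul_left_cancel₀ hc ?_
  rw [← mul_assoc, ← hsum 0, ← hsum m, hzero]
  ring

theorem prod_Icc_eq_prod_fin {M : Type*} [CommMonoid M] (n : ℕ) (f : ℕ → M) :
    ∏ i ∈ Finset.Icc 1 n, f i = ∏ i : Fin n, f (i + 1) := by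
  rw [Fin.prod_univ_eq_prod_range (fun i => f (i + 1)) n, Finset.range_eq_Ico,
    Finset.prod_Ico_add' f 0 n 1]
  rfl

theorem prod_ppBox_filter_le {M : Type*} [CommMonoid M] (n m : ℕ) (f : ℕ × ℕ × ℕ → M) :
    ∏ p ∈ ppBox n n m with p.1 ≤ p.2.1, f p =
      ∏ i : Fin n, ∏ j ∈ Finset.Ici i, ∏ k ∈ Finset.Icc 1 m, f (i + 1, j + 1, k) := by
  rw [Finset.prod_filter, ppBox, Finset.prod_product, prod_Icc_eq_prod_fin]
  refine Finset.prod_congr rfl fun i _ => ?_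
  rw [Finset.prod_product, prod_Icc_eq_prod_fin, ← Finset.filter_le_eq_Ici, Finset.prod_filter]
  refine Finset.prod_congr rfl fun j _ => ?_
  simp only [Nat.add_le_add_iff_right, Fin.val_fin_le]
  split_ifs <;> simp

theorem prod_Icc_telescope {M : Type*} [CommMonoid M] {f g : ℕ → M}
    (hfg : ∀ k, 1 ≤ k → f k * g k = 1) (m : ℕ) :
    f 1 * ∏ k ∈ Finset.Icc 1 m, f (k + 1) * g k = f (m + 1) := by
  induction m with
  | zero => simp
  | succ m ih =>
    rw [Finset.prod_Icc_succ_top (by lia), ← mul_assoc, ih, mul_left_comm, hfg _ (by lia), mul_one]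

open PowerSeries in
theorem weylProduct_zero_mul_prod_ppBox {K : Type*} [Field K] (n m : ℕ) :
    weylProduct (X : K⟦X⟧) n 0 * ∏ p ∈ ppBox n n m with p.1 ≤ p.2.1,
        (1 - (X : K⟦X⟧) ^ (1 + (p.1 + p.2.1 + p.2.2 - 2))) *
          (1 - (X : K⟦X⟧) ^ (p.1 + p.2.1 + p.2.2 - 2))⁻¹ =
      weylProduct (X : K⟦X⟧) n m := by
  rw [prod_ppBox_filter_le]
  simp only [weylProduct, ← Finset.prod_mul_distrib]
  refine Finset.prod_congr rfl fun i _ => Finset.prod_congr rfl fun j _ => ?_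
  have hinv (k : ℕ) (hk : 1 ≤ k) :
      (1 - (X : K⟦X⟧) ^ (i + j + k : ℕ)) * (1 - (X : K⟦X⟧) ^ (i + j + k : ℕ))⁻¹ = 1 :=
    PowerSeries.mul_inv_cancel _ (by simp [Nat.ne_of_gt hk])
  have htel := prod_Icc_telescope hinv m
  rw [zero_add, add_assoc m, add_comm m, add_assoc _ m, ← htel]
  congr 1
  refine Finset.prod_congr rfl fun k _ => ?_
  rw [show (i : ℕ) + 1 + (j + 1) + k - 2 = i + j + k by lia, add_comm 1, add_assoc _ k]

open PowerSeries in
theorem orbit_counting_symmetric_pp_general {K : Type*} [Field K] (m n : ℕ) :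
    ∑ P ∈ (ppBox n n m).powerset.filter
        (fun P => IsPlanePartition P ∧ IsSymmetricPP P),
      (X : K⟦X⟧) ^ orbitCount P =
    ∏ p ∈ (ppBox n n m).filter (fun p => p.1 ≤ p.2.1),
      (1 - (X : K⟦X⟧) ^ (1 + (p.1 + p.2.1 + p.2.2 - 2))) *
        (1 - (X : K⟦X⟧) ^ (p.1 + p.2.1 + p.2.2 - 2))⁻¹ := by
  have hne (k : ℕ) (hk : k ≠ 0) : (1 - X ^ k : K⟦X⟧) ≠ 0 := fun h => by
    simpa [hk] using congrArg constantCoeff h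
  have hweyl : weylProduct (X : K⟦X⟧) n 0 ≠ 0 :=
    Finset.prod_ne_zero_iff.mpr fun i _ => Finset.prod_ne_zero_iff.mpr fun j _ =>
      hne _ (Nat.succ_ne_zero _)
  refine mul_left_cancel₀ hweyl ?_
  rw [weylProduct_zero_mul_prod_ppBox]
  exact weylProduct_zero_mul_sum_symmetricPPs X_ne_zero hne n m

end OrbitProduct

/-- The orbit-counting generating function for symmetric plane partitions in `B(n,n,m)`
is `∏_{η ∈ B(n,n,m)/S₂} (1-q^{1+Ht(η)})/(1-q^{Ht(η)})`, where the orbits `η` are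
represented by their elements `(i,j,k)` with `i ≤ j` and `Ht(η) = i+j+k-2`. -/
theorem orbit_counting_symmetric_pp (m n : ℕ) (hm : 0 < m) (hn : 0 < n) :
    ∑ P ∈ (ppBox n n m).powerset.filter
        (fun P => IsPlanePartition P ∧ IsSymmetricPP P),
      (PowerSeries.X : PowerSeries ℚ) ^ orbitCount P =
    ∏ p ∈ (ppBox n n m).filter (fun p => p.1 ≤ p.2.1),
      (1 - (PowerSeries.X : PowerSeries ℚ) ^ (1 + (p.1 + p.2.1 + p.2.2 - 2))) *
        (1 - (PowerSeries.X : PowerSeries ℚ) ^ (p.1 + p.2.1 + p.2.2 - 2))⁻¹ :=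
  orbit_counting_symmetric_pp_general m n
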